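/- arXiv:1205.5997 — 2 statements merged into one kernel-verified Lean document; each statement's English description precedes it below -/
import Mathlib

section
/- Suppose u ∈ C²(Ω) satisfies -Δu = f in an open set Ω ⊆ ℝ^N with f, u bounded. Then for every y ∈ Ω, |∇u(y)|² ≤ C ( ‖f‖_{L^∞(Ω)} ‖u‖_{L^∞(Ω)} + dist(y, ∂Ω)^{-2} ‖u‖_{L^∞(Ω)}² ), where C depends only on N. -/
open MeasureTheory

/-!
The gradient bound is obtained from the maximum principle alone, by a reflection argument.

Fix a coordinate direction `e_k` and a ball of radius `d` around `y` inside `Ω`, and translate `y`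
to the origin. The odd part `φ v = (u (y + v) - u (y + R v)) / 2` of `u` under the reflection `R` in
the hyperplane `v_k = 0` vanishes on that hyperplane, is bounded by `M = sup |u|`, and satisfies
`|Δ φ| < F` whenever `|Δ u| < F`. In the half ball `‖v‖ ≤ d`, `0 ≤ v_k` it is compared with
the barrier `ψ v = M ‖v‖² / d² + B v_k (d - v_k)`, where `B = N M / d² + F / 2`. The barrier is
nonnegative on the flat part of the boundary, at least `M` on the spherical part, and `Δ ψ = -F`.
So `Δ (φ - ψ) > 0`, the maximum of `φ - ψ` is attained on the boundary, and `φ ≤ ψ`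
(`barrierDiff_nonpos`). Both functions vanish at the origin, so their `e_k`-derivatives there are
ordered: `∂ₖ u (y) ≤ B d = N M / d + F d / 2` (`partial_le`).

Choosing `d = min (√(M / F)) (dist (y, ∂Ω) / 2)` balances the two terms and gives the claim for
positive `M` and `F` (`grad_bound`); the general case follows by letting `M' ↓ M`, `F' ↓ F`.
-/

/-! ### Second-order condition at a maximum -/

/-- Second-order necessary condition: at a local maximum the second derivative is not positive. -/
lemma not_isLocalMax_of_second_deriv_pos {g g' : ℝ → ℝ} {a : ℝ}
    (h1 : ∀ᶠ t in nhds (0:ℝ), HasDerivAt g (g' t) t) (h2 : HasDerivAt g' a 0) (ha : 0 < a) :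
    ¬ IsLocalMax g 0 := by
  intro hmax
  have hd : deriv g =ᶠ[nhds 0] g' := h1.mono fun t ht => ht.deriv
  have hdd : deriv (deriv g) 0 = a := by rw [hd.deriv_eq, h2.deriv]
  have hmin : IsLocalMin g 0 :=
    isLocalMin_of_deriv_deriv_pos (by rw [hdd]; exact ha) hmax.deriv_eq_zero
      h1.self_of_nhds.continuousAt
  -- a point that is both a local maximum and a local minimum has `g` constant nearby
  have hc : g =ᶠ[nhds 0] fun _ => g 0 := by
    filter_upwards [hmax, hmin] with t h h'
    exact le_antisymm h h'
  have : deriv (deriv g) 0 = 0 := by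
    rw [hc.deriv.deriv_eq]; simp
  linarith

/-! ### Reflection and barrier -/

section Comparison

variable {N : ℕ}

/-- The reflection in the hyperplane `v_k = 0`. -/
noncomputable def flipCoord (k : Fin N) (v : EuclideanSpace ℝ (Fin N)) : EuclideanSpace ℝ (Fin N) :=
  v - (2 * v k) • EuclideanSpace.single k (1:ℝ)

/-- The difference `φ - ψ` of the odd part of `u` around `y` and the quadratic barrier. -/
noncomputable def barrierDiff (u : EuclideanSpace ℝ (Fin N) → ℝ) (y : EuclideanSpace ℝ (Fin N))
    (k : Fin N) (M B d : ℝ) (v : EuclideanSpace ℝ (Fin N)) : ℝ :=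
  (u (y + v) - u (y + flipCoord k v)) / 2 - (M / d ^ 2 * ‖v‖ ^ 2 + B * (v k * (d - v k)))

lemma norm_add_single_sq (v : EuclideanSpace ℝ (Fin N)) (i : Fin N) (t : ℝ) :
    ‖v + t • EuclideanSpace.single i (1:ℝ)‖ ^ 2 = ‖v‖ ^ 2 + 2 * t * v i + t ^ 2 := by
  rw [norm_add_sq_real, inner_smul_right, EuclideanSpace.inner_single_right, norm_smul]
  simp
  ring

lemma norm_flipCoord (k : Fin N) (v : EuclideanSpace ℝ (Fin N)) : ‖flipCoord k v‖ = ‖v‖ := by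
  have h := norm_add_single_sq v k (-(2 * v k))
  rw [neg_smul, ← sub_eq_add_neg] at h
  have h' : ‖flipCoord k v‖ ^ 2 = ‖v‖ ^ 2 := by rw [flipCoord, h]; ring
  exact (sq_eq_sq₀ (norm_nonneg _) (norm_nonneg _)).1 h'

lemma continuous_flipCoord (k : Fin N) : Continuous (flipCoord k) := by
  unfold flipCoord; fun_prop

lemma flipCoord_add_single (k i : Fin N) (v : EuclideanSpace ℝ (Fin N)) (t : ℝ) :
    flipCoord k (v + t • EuclideanSpace.single i (1:ℝ)) =
      flipCoord k v + (t * (if i = k then -1 else 1)) • EuclideanSpace.single i (1:ℝ) := by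
  by_cases h : i = k
  · subst h
    simp only [flipCoord, PiLp.add_apply, PiLp.smul_apply, PiLp.single_apply, if_true, smul_eq_mul]
    module
  · have h' : k ≠ i := fun e => h e.symm
    simp only [flipCoord, PiLp.add_apply, PiLp.smul_apply, PiLp.single_apply, if_neg h, if_neg h',
      smul_eq_mul]
    module

/-- The restriction of `barrierDiff` to a line in a coordinate direction, written out. -/
lemma barrierDiff_line (u : EuclideanSpace ℝ (Fin N) → ℝ) (y : EuclideanSpace ℝ (Fin N))
    (k i : Fin N) (M B d : ℝ) (v : EuclideanSpace ℝ (Fin N)) (t : ℝ) :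
    barrierDiff u y k M B d (v + t • EuclideanSpace.single i (1:ℝ)) =
      (u ((y + v) + (t * 1) • EuclideanSpace.single i (1:ℝ)) - u ((y + flipCoord k v) +
        (t * (if i = k then -1 else 1)) • EuclideanSpace.single i (1:ℝ))) / 2 -
      (M / d ^ 2 * (‖v‖ ^ 2 + 2 * t * v i + t ^ 2) +
        B * ((v k + t * (if i = k then 1 else 0)) *
          (d - (v k + t * (if i = k then 1 else 0))))) := by
  rw [barrierDiff, flipCoord_add_single, norm_add_single_sq, add_assoc, add_assoc, mul_one]
  by_cases h : i = k
  · simp [h, add_assoc]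
  · have h' : k ≠ i := fun e => h e.symm
    simp [h, h', add_assoc]

lemma hasDerivAt_line {g : EuclideanSpace ℝ (Fin N) → ℝ} (p : EuclideanSpace ℝ (Fin N))
    (i : Fin N) (s t : ℝ)
    (h : DifferentiableAt ℝ g (p + (t * s) • EuclideanSpace.single i (1:ℝ))) :
    HasDerivAt (fun t : ℝ => g (p + (t * s) • EuclideanSpace.single i (1:ℝ)))
      (s * fderiv ℝ g (p + (t * s) • EuclideanSpace.single i (1:ℝ))
        (EuclideanSpace.single i 1)) t := by
  have h1 : HasDerivAt (fun t : ℝ => p + (t * s) • EuclideanSpace.single i (1:ℝ))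
      ((1 * s) • EuclideanSpace.single i (1:ℝ)) t :=
    (((hasDerivAt_id t).mul_const s).smul_const _).const_add p
  have h2 := h.hasFDerivAt.comp_hasDerivAt t h1
  exact h2.congr_deriv (by simp)

/-- First derivative of `barrierDiff` along a coordinate line. -/
lemma barrierDiff_hasDerivAt {u : EuclideanSpace ℝ (Fin N) → ℝ} (y : EuclideanSpace ℝ (Fin N))
    (k i : Fin N) (M B d : ℝ) (v : EuclideanSpace ℝ (Fin N)) (t : ℝ)
    (h1 : DifferentiableAt ℝ u ((y + v) + (t * 1) • EuclideanSpace.single i (1:ℝ)))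
    (h2 : DifferentiableAt ℝ u ((y + flipCoord k v) +
      (t * (if i = k then -1 else 1)) • EuclideanSpace.single i (1:ℝ))) :
    HasDerivAt (fun t : ℝ => barrierDiff u y k M B d (v + t • EuclideanSpace.single i (1:ℝ)))
      ((1 * fderiv ℝ u ((y + v) + (t * 1) • EuclideanSpace.single i (1:ℝ))
          (EuclideanSpace.single i 1) -
        (if i = k then -1 else 1) * fderiv ℝ u ((y + flipCoord k v) +
          (t * (if i = k then -1 else 1)) • EuclideanSpace.single i (1:ℝ))
          (EuclideanSpace.single i 1)) / 2 -
        (M / d ^ 2 * (2 * v i + 2 * t) +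
          B * ((if i = k then 1 else 0) *
            (d - 2 * (v k + t * (if i = k then 1 else 0)))))) t := by
  simp only [barrierDiff_line]
  refine (((hasDerivAt_line _ i 1 t h1).sub (hasDerivAt_line _ i _ t h2)).div_const 2).sub ?_
  have hid := hasDerivAt_id t
  have ha : HasDerivAt (fun t : ℝ => ‖v‖ ^ 2 + 2 * t * v i + t ^ 2) (2 * v i + 2 * t) t := by
    have := (((hid.const_mul 2).mul_const (v i)).const_add (‖v‖ ^ 2)).add (hid.pow 2)
    exact this.congr_deriv (by simp)
  generalize (if i = k then (1:ℝ) else 0) = e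
  have hb : HasDerivAt (fun t : ℝ => v k + t * e) e t := by
    simpa using (hid.mul_const e).const_add (v k)
  have hc := (ha.const_mul (M / d ^ 2)).add ((hb.mul (hb.const_sub d)).const_mul B)
  exact hc.congr_deriv (by ring)

/-! ### Maximum principle in the half ball -/

/-- The comparison `φ ≤ ψ` in the half ball, by the maximum principle. -/
lemma barrierDiff_nonpos {Ω : Set (EuclideanSpace ℝ (Fin N))} {u : EuclideanSpace ℝ (Fin N) → ℝ}
    {M F d B : ℝ} (hΩ : IsOpen Ω) (hu : ContDiffOn ℝ 2 u Ω)
    (hF : ∀ y ∈ Ω, |∑ i, fderiv ℝ (fun z => fderiv ℝ u z (EuclideanSpace.single i 1)) y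
          (EuclideanSpace.single i 1)| < F)
    (hM : ∀ y ∈ Ω, |u y| ≤ M) {y : EuclideanSpace ℝ (Fin N)} (hd : 0 < d)
    (hball : Metric.closedBall y d ⊆ Ω) (k : Fin N) (hB : B = N * M / d ^ 2 + F / 2)
    {v : EuclideanSpace ℝ (Fin N)} (hv : ‖v‖ ≤ d) (hvk : 0 ≤ v k) :
    barrierDiff u y k M B d v ≤ 0 := by
  have hmem : ∀ w : EuclideanSpace ℝ (Fin N), ‖w‖ ≤ d → y + w ∈ Ω := fun w hw =>
    hball (by simpa [Metric.mem_closedBall, dist_eq_norm] using hw)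
  have hy : y ∈ Ω := by simpa using hmem 0 (by simpa using hd.le)
  have hM0 : 0 ≤ M := (abs_nonneg _).trans (hM y hy)
  have hF0 : 0 < F := (abs_nonneg _).trans_lt (hF y hy)
  have hB0 : 0 ≤ B := by rw [hB]; positivity
  have huc : ContinuousOn u Ω := hu.continuousOn
  have hudiff : ∀ p ∈ Ω, DifferentiableAt ℝ u p := fun p hp =>
    (hu.contDiffAt (hΩ.mem_nhds hp)).differentiableAt (by norm_num)
  have hudiff2 : ∀ p ∈ Ω, ∀ i : Fin N, DifferentiableAt ℝ
      (fun z => fderiv ℝ u z (EuclideanSpace.single i 1)) p := fun p hp i =>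
    (((hu.contDiffAt (hΩ.mem_nhds hp)).fderiv_right (m := 1) (by norm_num)).differentiableAt
      (by norm_num)).clm_apply (differentiableAt_const _)
  let K : Set (EuclideanSpace ℝ (Fin N)) := Metric.closedBall 0 d ∩ {w | 0 ≤ w k}
  have hKc : IsCompact K := (isCompact_closedBall 0 d).inter_right
    (isClosed_le continuous_const (by fun_prop))
  have hKnorm : ∀ w ∈ K, ‖w‖ ≤ d := fun w hw => by simpa using hw.1
  have hcont : ContinuousOn (barrierDiff u y k M B d) K := by
    have c1 : ContinuousOn (fun w => u (y + w)) K :=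
      huc.comp (by fun_prop) fun w hw => hmem w (hKnorm w hw)
    have c2 : ContinuousOn (fun w => u (y + flipCoord k w)) K :=
      huc.comp ((continuous_const.add (continuous_flipCoord k)).continuousOn)
        fun w hw => hmem _ ((norm_flipCoord k w).le.trans (hKnorm w hw))
    unfold barrierDiff
    refine ((c1.sub c2).div_const 2).sub ?_
    fun_prop
  obtain ⟨w, hwK, hw⟩ := hKc.exists_isMaxOn ⟨v, by simpa using hv, hvk⟩ hcont
  refine (hw (show v ∈ K from ⟨by simpa using hv, hvk⟩)).trans ?_
  have hwn := hKnorm w hwK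
  have hwk : 0 ≤ w k := hwK.2
  have hwkd : w k ≤ d := (le_abs_self _).trans ((PiLp.norm_apply_le w k).trans hwn)
  have hp := hmem w hwn
  have hq := hmem (flipCoord k w) ((norm_flipCoord k w).le.trans hwn)
  have hpos : 0 ≤ B * (w k * (d - w k)) :=
    mul_nonneg hB0 (mul_nonneg hwk (by linarith))
  rcases hwk.eq_or_lt with h0 | h0
  · -- flat part of the boundary
    have : flipCoord k w = w := by simp [flipCoord, ← h0]
    rw [barrierDiff, this]
    have : 0 ≤ M / d ^ 2 * ‖w‖ ^ 2 := by positivity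
    linarith
  rcases hwn.eq_or_lt with h1 | h1
  · -- spherical part of the boundary
    rw [barrierDiff, h1, div_mul_cancel₀ _ (by positivity)]
    have a1 := abs_le.1 (hM _ hp)
    have a2 := abs_le.1 (hM _ hq)
    linarith
  -- at an interior maximum all pure second derivatives would be nonpositive
  exfalso
  have hKn : K ∈ nhds w := by
    refine Filter.inter_mem ?_ ?_
    · exact Metric.closedBall_mem_nhds_of_mem (by simpa using h1)
    · have : IsOpen {z : EuclideanSpace ℝ (Fin N) | 0 < z k} :=
        isOpen_lt continuous_const (by fun_prop)
      exact Filter.mem_of_superset (this.mem_nhds h0) fun z hz => (show 0 < z k from hz).le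
  have hmax : IsLocalMax (barrierDiff u y k M B d) w := hw.isLocalMax hKn
  have key : ∀ i : Fin N,
      (fderiv ℝ (fun z => fderiv ℝ u z (EuclideanSpace.single i 1)) (y + w)
          (EuclideanSpace.single i 1) -
        fderiv ℝ (fun z => fderiv ℝ u z (EuclideanSpace.single i 1)) (y + flipCoord k w)
          (EuclideanSpace.single i 1)) / 2 -
      (2 * (M / d ^ 2) - 2 * B * (if i = k then 1 else 0)) ≤ 0 := by
    intro i
    by_contra! hcon
    have e1 : ∀ (p : EuclideanSpace ℝ (Fin N)) (s : ℝ), p ∈ Ω → ∀ᶠ t : ℝ in nhds 0,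
        p + (t * s) • EuclideanSpace.single i (1:ℝ) ∈ Ω := fun p s hp => by
      have hc : Continuous fun t : ℝ => p + (t * s) • EuclideanSpace.single i (1:ℝ) := by
        fun_prop
      exact hc.continuousAt.eventually_mem (by simpa using hΩ.mem_nhds hp)
    have hder := ((e1 _ 1 hp).and (e1 _ (if i = k then -1 else 1) hq)).mono fun t ht =>
      barrierDiff_hasDerivAt (u := u) y k i M B d w t (hudiff _ ht.1) (hudiff _ ht.2)
    refine not_isLocalMax_of_second_deriv_pos hder ?_ hcon ?_
    · have d1 := hasDerivAt_line (g := fun z => fderiv ℝ u z (EuclideanSpace.single i 1))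
        (y + w) i 1 0 (hudiff2 _ (by simpa using hp) i)
      have d2 := hasDerivAt_line (g := fun z => fderiv ℝ u z (EuclideanSpace.single i 1))
        (y + flipCoord k w) i (if i = k then -1 else 1) 0 (hudiff2 _ (by simpa using hq) i)
      have hid := hasDerivAt_id (0:ℝ)
      have d3 := ((hid.const_mul 2).const_add (2 * w i)).const_mul (M / d ^ 2)
      have d4 := ((((hid.mul_const (if i = k then (1:ℝ) else 0)).const_add
        (w k)).const_mul 2).const_sub d).const_mul (if i = k then (1:ℝ) else 0) |>.const_mul B
      have d5 := (((d1.const_mul 1).sub (d2.const_mul (if i = k then -1 else 1))).div_const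
        2).sub (d3.add d4)
      refine d5.congr_deriv ?_
      split_ifs <;> simp <;> ring
    · have hc : ContinuousAt (fun t : ℝ => w + t • EuclideanSpace.single i (1:ℝ)) 0 := by
        fun_prop
      have := hc.eventually (p := fun z => barrierDiff u y k M B d z ≤ barrierDiff u y k M B d w)
        (by simpa using (show ∀ᶠ z in nhds w, _ from hmax))
      simpa [IsLocalMax, IsMaxFilter] using this
  have hsum := Finset.sum_nonpos (s := Finset.univ) fun i _ => key i
  rw [Finset.sum_sub_distrib, ← Finset.sum_div, Finset.sum_sub_distrib,
    Finset.sum_sub_distrib, ← Finset.mul_sum, ← Finset.mul_sum] at hsum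
  simp only [Finset.sum_const, Finset.card_univ, Fintype.card_fin, nsmul_eq_mul,
    Finset.sum_ite_eq', Finset.mem_univ, if_true] at hsum
  have b1 := (abs_lt.1 (hF _ hp)).1
  have b2 := (abs_lt.1 (hF _ hq)).2
  have b3 : 2 * ((N:ℝ) * (M / d ^ 2)) = 2 * (N * M / d ^ 2) := by ring
  rw [b3] at hsum
  linarith

/-! ### Gradient bounds -/

/-- One-sided bound for a partial derivative at the centre of a ball contained in `Ω`. -/
lemma partial_le {Ω : Set (EuclideanSpace ℝ (Fin N))} {u : EuclideanSpace ℝ (Fin N) → ℝ}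
    {M F d : ℝ} (hΩ : IsOpen Ω) (hu : ContDiffOn ℝ 2 u Ω)
    (hF : ∀ y ∈ Ω, |∑ i, fderiv ℝ (fun z => fderiv ℝ u z (EuclideanSpace.single i 1)) y
          (EuclideanSpace.single i 1)| < F)
    (hM : ∀ y ∈ Ω, |u y| ≤ M) {y : EuclideanSpace ℝ (Fin N)} (hd : 0 < d)
    (hball : Metric.closedBall y d ⊆ Ω) (k : Fin N) :
    fderiv ℝ u y (EuclideanSpace.single k 1) ≤ N * M / d + F * d / 2 := by
  have hy : y ∈ Ω := hball (Metric.mem_closedBall_self hd.le)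
  have hdy : DifferentiableAt ℝ u y :=
    (hu.contDiffAt (hΩ.mem_nhds hy)).differentiableAt (by norm_num)
  obtain ⟨B, hB⟩ : ∃ B : ℝ, B = N * M / d ^ 2 + F / 2 := ⟨_, rfl⟩
  have hr : flipCoord k (0 : EuclideanSpace ℝ (Fin N)) = 0 := by simp [flipCoord]
  have h := barrierDiff_hasDerivAt (u := u) y k k M B d 0 0 (by simpa using hdy)
    (by simpa [hr] using hdy)
  have hlim := h.tendsto_slope_zero_right
  have hle := le_of_tendsto hlim (b := 0) (by
    filter_upwards [Ioo_mem_nhdsGT hd] with t ht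
    have h1 := barrierDiff_nonpos hΩ hu hF hM hd hball k hB
      (v := 0 + t • EuclideanSpace.single k (1:ℝ))
      (by simpa [norm_smul, abs_of_pos ht.1] using ht.2.le) (by simpa using ht.1.le)
    have h2 : barrierDiff u y k M B d (0 + (0:ℝ) • EuclideanSpace.single k (1:ℝ)) = 0 := by
      simp [barrierDiff, hr]
    rw [h2, zero_add t, sub_zero, smul_eq_mul]
    exact mul_nonpos_of_nonneg_of_nonpos (inv_nonneg.2 ht.1.le) h1)
  simp [hr] at hle
  have hBd : B * d = N * M / d + F * d / 2 := by rw [hB]; field_simp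
  linarith

/-- The gradient bound on a ball contained in `Ω`. -/
lemma norm_fderiv_le {Ω : Set (EuclideanSpace ℝ (Fin N))} {u : EuclideanSpace ℝ (Fin N) → ℝ}
    {M F d : ℝ} (hΩ : IsOpen Ω) (hu : ContDiffOn ℝ 2 u Ω)
    (hF : ∀ y ∈ Ω, |∑ i, fderiv ℝ (fun z => fderiv ℝ u z (EuclideanSpace.single i 1)) y
          (EuclideanSpace.single i 1)| < F)
    (hM : ∀ y ∈ Ω, |u y| ≤ M) {y : EuclideanSpace ℝ (Fin N)} (hd : 0 < d)
    (hball : Metric.closedBall y d ⊆ Ω) :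
    ‖fderiv ℝ u y‖ ≤ N * (N * M / d + F * d / 2) := by
  have hy : y ∈ Ω := hball (Metric.mem_closedBall_self hd.le)
  have hM0 : 0 ≤ M := (abs_nonneg _).trans (hM y hy)
  have hF0 : 0 < F := (abs_nonneg _).trans_lt (hF y hy)
  have habs : ∀ k : Fin N, |fderiv ℝ u y (EuclideanSpace.single k 1)| ≤
      N * M / d + F * d / 2 := by
    intro k
    have h1 := partial_le hΩ hu hF hM hd hball k
    have h2 := partial_le (u := fun z => -u z) hΩ hu.neg
      (by simpa [fderiv_fun_neg] using hF) (by simpa using hM) hd hball k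
    rw [fderiv_fun_neg] at h2
    exact abs_le.2 ⟨by simp at h2; linarith, h1⟩
  refine ContinuousLinearMap.opNorm_le_bound _ (by positivity) fun v => ?_
  have hv : v = ∑ i, v i • EuclideanSpace.single i (1:ℝ) := by
    have := (EuclideanSpace.basisFun (Fin N) ℝ).sum_repr v
    simpa using this.symm
  conv_lhs => rw [hv, map_sum]
  refine (norm_sum_le _ _).trans ?_
  calc ∑ i, ‖fderiv ℝ u y (v i • EuclideanSpace.single i (1:ℝ))‖
      ≤ ∑ _i : Fin N, (N * M / d + F * d / 2) * ‖v‖ := by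
        refine Finset.sum_le_sum fun i _ => ?_
        rw [map_smul, norm_smul, mul_comm]
        exact mul_le_mul (habs i) (PiLp.norm_apply_le v i) (norm_nonneg _) (by positivity)
    _ = N * (N * M / d + F * d / 2) * ‖v‖ := by simp; ring

/-- The interpolation estimate for positive bounds, the one on `Δ u` being strict. -/
lemma grad_bound {Ω : Set (EuclideanSpace ℝ (Fin N))} {u : EuclideanSpace ℝ (Fin N) → ℝ}
    {M F : ℝ} (hΩ : IsOpen Ω) (hu : ContDiffOn ℝ 2 u Ω)
    (hF : ∀ y ∈ Ω, |∑ i, fderiv ℝ (fun z => fderiv ℝ u z (EuclideanSpace.single i 1)) y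
          (EuclideanSpace.single i 1)| < F)
    (hM : ∀ y ∈ Ω, |u y| ≤ M) (hM0 : 0 < M) {y : EuclideanSpace ℝ (Fin N)} (hy : y ∈ Ω) :
    ‖fderiv ℝ u y‖ ^ 2 ≤ ((N:ℝ) ^ 2 * (8 * N ^ 2 + 1) + 1) *
      (F * M + ((Metric.infDist y Ωᶜ)⁻¹) ^ 2 * M ^ 2) := by
  have hF0 : 0 < F := (abs_nonneg _).trans_lt (hF y hy)
  set D := Metric.infDist y Ωᶜ with hD
  obtain ⟨d, hd, hball, hd1, hd2⟩ : ∃ d : ℝ, 0 < d ∧ Metric.closedBall y d ⊆ Ω ∧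
      d ^ 2 ≤ M / F ∧ (d⁻¹) ^ 2 ≤ F / M + 4 * (D⁻¹) ^ 2 := by
    have hs : 0 < √(M / F) := Real.sqrt_pos.2 (by positivity)
    have hs2 : √(M / F) ^ 2 = M / F := Real.sq_sqrt (by positivity)
    have hs3 : (√(M / F))⁻¹ ^ 2 = F / M := by rw [inv_pow, hs2, inv_div]
    rcases Set.eq_empty_or_nonempty Ωᶜ with he | hne
    · -- here `D = 0` is a junk value and there is no constraint on the radius
      refine ⟨√(M / F), hs, ?_, hs2.le, ?_⟩
      · rw [Set.compl_empty_iff.1 he]; exact Set.subset_univ _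
      · rw [hs3]; exact le_add_of_nonneg_right (by positivity)
    · have hD0 : 0 < D :=
        (hΩ.isClosed_compl.notMem_iff_infDist_pos hne).1 (by simpa using hy)
      refine ⟨min (√(M / F)) (D / 2), by positivity, ?_, ?_, ?_⟩
      · intro z hz
        by_contra hzΩ
        have h1 : D ≤ dist y z := Metric.infDist_le_dist_of_mem hzΩ
        have h2 : dist z y ≤ D / 2 := (Metric.mem_closedBall.1 hz).trans (min_le_right _ _)
        rw [dist_comm] at h2
        linarith
      · exact (pow_le_pow_left₀ (le_min hs.le (half_pos hD0).le) (min_le_left _ _) 2).trans hs2.le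
      · rcases min_choice (√(M / F)) (D / 2) with h | h <;> rw [h]
        · rw [hs3]; exact le_add_of_nonneg_right (by positivity)
        · have : (D / 2)⁻¹ ^ 2 = 4 * D⁻¹ ^ 2 := by field_simp; norm_num
          rw [this]; exact le_add_of_nonneg_left (by positivity)
  have h := norm_fderiv_le hΩ hu hF hM hd hball
  have h1 : ‖fderiv ℝ u y‖ ^ 2 ≤ (N * (N * M / d + F * d / 2)) ^ 2 :=
    pow_le_pow_left₀ (norm_nonneg _) h 2
  have h2 : (N * M / d + F * d / 2) ^ 2 ≤ 2 * (N ^ 2 * M ^ 2 * (d⁻¹) ^ 2) + F ^ 2 * d ^ 2 / 2 := by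
    have : 2 * (N ^ 2 * M ^ 2 * (d⁻¹) ^ 2) + F ^ 2 * d ^ 2 / 2 - (N * M / d + F * d / 2) ^ 2 =
        (N * M / d - F * d / 2) ^ 2 := by ring
    nlinarith [sq_nonneg (N * M / d - F * d / 2)]
  have h3 : F ^ 2 * d ^ 2 ≤ F * M := by
    calc F ^ 2 * d ^ 2 ≤ F ^ 2 * (M / F) := by gcongr
      _ = F * M := by field_simp
  have h4 : (N:ℝ) ^ 2 * M ^ 2 * (d⁻¹) ^ 2 ≤ N ^ 2 * (F * M + 4 * ((D⁻¹) ^ 2 * M ^ 2)) := by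
    calc (N:ℝ) ^ 2 * M ^ 2 * (d⁻¹) ^ 2 ≤ N ^ 2 * M ^ 2 * (F / M + 4 * (D⁻¹) ^ 2) := by gcongr
      _ = _ := by field_simp
  have hX : 0 ≤ F * M := by positivity
  have hY : 0 ≤ (D⁻¹) ^ 2 * M ^ 2 := by positivity
  generalize F * M = X at *
  generalize (D⁻¹) ^ 2 * M ^ 2 = Y at *
  have h5 : (N * M / d + F * d / 2) ^ 2 ≤ (8 * N ^ 2 + 1) * (X + Y) := by
    nlinarith [mul_nonneg (sq_nonneg (N:ℝ)) hX]
  calc ‖fderiv ℝ u y‖ ^ 2 ≤ N ^ 2 * (N * M / d + F * d / 2) ^ 2 := by rw [← mul_pow]; exact h1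
    _ ≤ N ^ 2 * ((8 * N ^ 2 + 1) * (X + Y)) := by gcongr
    _ ≤ _ := by nlinarith

end Comparison

/-- Interpolation-type gradient estimate of Bethuel–Brezis–Hélein: if `-Δu = f` in an open
set `Ω ⊆ ℝ^N` with `u, f` bounded, then
`|∇u(y)|² ≤ C (‖f‖_∞‖u‖_∞ + dist(y,∂Ω)⁻² ‖u‖_∞²)` with `C = C(N)`. -/
theorem stmt4 (N : ℕ) :
    ∃ C > (0:ℝ), ∀ (Ω : Set (EuclideanSpace ℝ (Fin N))) (u f : EuclideanSpace ℝ (Fin N) → ℝ)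
      (Mu Mf : ℝ), IsOpen Ω → ContDiffOn ℝ 2 u Ω →
      (∀ y ∈ Ω, ∑ i, fderiv ℝ (fun z => fderiv ℝ u z (EuclideanSpace.single i 1)) y
          (EuclideanSpace.single i 1) = - f y) →
      (∀ y ∈ Ω, |u y| ≤ Mu) → (∀ y ∈ Ω, |f y| ≤ Mf) →
      ∀ y ∈ Ω, ‖fderiv ℝ u y‖ ^ 2 ≤
        C * (Mf * Mu + ((Metric.infDist y Ωᶜ)⁻¹) ^ 2 * Mu ^ 2) := by
  refine ⟨(N:ℝ) ^ 2 * (8 * N ^ 2 + 1) + 1, by positivity, ?_⟩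
  intro Ω u f Mu Mf hΩ hu hlap hMu hMf y hy
  have hMu0 : 0 ≤ Mu := (abs_nonneg _).trans (hMu y hy)
  -- both bounds are enlarged by `ε`, and `ε ↓ 0`
  have hc : Continuous fun ε : ℝ => ((N:ℝ) ^ 2 * (8 * N ^ 2 + 1) + 1) *
      ((Mf + ε) * (Mu + ε) + ((Metric.infDist y Ωᶜ)⁻¹) ^ 2 * (Mu + ε) ^ 2) := by fun_prop
  have hlim := (hc.tendsto 0).mono_left (nhdsWithin_le_nhds (s := Set.Ioi (0:ℝ)))
  simp only [add_zero] at hlim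
  refine ge_of_tendsto hlim ?_
  filter_upwards [self_mem_nhdsWithin] with ε hε_mem
  have hε : 0 < ε := hε_mem
  refine grad_bound hΩ hu (fun z hz => ?_) (fun z hz => ?_) (by linarith) hy
  · rw [hlap z hz, abs_neg]
    linarith [hMf z hz]
  · linarith [hMu z hz]
end

section
/- Let u : ℝ → ℝ be a positive C³ solution of u'' = u(u² + x) (after the sign change x → -x of equation (B.3), i.e. of -u'' - xu + u³ = 0 with p = 2) such that u'(x) → 0 as x → ±∞. If v = u' is not strictly positive, then there exists x₀ with v(x₀) ≤ 0, v'(x₀) = 0, v''(x₀) ≥ 0, yet v satisfies v'' - (u'/u)v' ... concretely: differentiating (u''/u - u^p)' = -1 yields v'' - (1/u)v v' - p u^p v = -u; evaluating at x₀ gives v''(x₀) - p u^p(x₀) v(x₀) = -u(x₀) < 0, a contradiction. Hence u' > 0 on ℝ. -/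
/-!
The proof is a maximum principle for `v = u'`. Since `v → 0` at both ends, if `v ≤ 0` somewhere
then `v` attains a global minimum at some `x₀` with `v x₀ ≤ 0`. There `v' x₀ = u'' x₀ = 0`, so the
equation gives `u x₀ ^ p = x₀`, and differentiating it gives
`v'' x₀ = p * u x₀ ^ p * v x₀ - u x₀ < 0`, contradicting minimality.
-/

open Filter

/-- The second-order necessary condition for a global minimum; no differentiability is needed,
since `deriv (deriv v) x₀` is `0` where it does not exist. -/
lemma deriv_deriv_nonneg_of_forall_le {v : ℝ → ℝ} {x₀ : ℝ} (hc : ContinuousAt v x₀)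
    (hmin : ∀ y, v x₀ ≤ v y) : 0 ≤ deriv (deriv v) x₀ := by
  by_contra! h
  have hd : deriv v x₀ = 0 := IsLocalMin.deriv_eq_zero (Eventually.of_forall hmin)
  -- `x₀` would also be a local maximum, so `v` would be locally constant.
  have hmax : IsLocalMax v x₀ := isLocalMax_of_deriv_deriv_neg h hd hc
  have hconst : v =ᶠ[nhds x₀] fun _ => v x₀ := by
    filter_upwards [hmax] with y hy using le_antisymm hy (hmin y)
  have := hconst.deriv.deriv_eq
  simp at this
  linarith

/-- A continuous function vanishing at `±∞` that is somewhere nonpositive attains a nonpositive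
global minimum. -/
lemma exists_nonpos_forall_le {v : ℝ → ℝ} (hc : Continuous v)
    (hbot : Tendsto v atBot (nhds 0)) (htop : Tendsto v atTop (nhds 0))
    {x₁ : ℝ} (h₁ : v x₁ ≤ 0) : ∃ x₀, v x₀ ≤ 0 ∧ ∀ y, v x₀ ≤ v y := by
  by_cases h : ∃ z, v z < 0
  · obtain ⟨z, hz⟩ := h
    obtain ⟨x₀, hx₀⟩ := hc.exists_forall_le' z (by
      rw [cocompact_eq_atBot_atTop, eventually_sup]
      exact ⟨(hbot.eventually (lt_mem_nhds hz)).mono fun _ => le_of_lt,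
        (htop.eventually (lt_mem_nhds hz)).mono fun _ => le_of_lt⟩)
    exact ⟨x₀, (hx₀ z).trans hz.le, hx₀⟩
  · push Not at h
    exact ⟨x₁, h₁, fun y => h₁.trans (h y)⟩

/-- A positive solution of `-u'' - xu + u^{p+1} = 0` on `ℝ` with `u → 0` at `-∞`,
`u - x^{1/p} → 0` at `+∞` and `u' → 0` at `±∞` is strictly increasing. -/
theorem stmt9 (p : ℝ) (hp : 1 < p) (u : ℝ → ℝ) (hu : ContDiff ℝ 3 u)
    (hpos : ∀ x, 0 < u x)
    (heq : ∀ x, -(deriv (deriv u) x) - x * u x + u x ^ (p + 1) = 0)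
    (hbot : Tendsto u atBot (nhds 0))
    (htop : Tendsto (fun x => u x - x ^ (1 / p)) atTop (nhds 0))
    (hdbot : Tendsto (deriv u) atBot (nhds 0))
    (hdtop : Tendsto (deriv u) atTop (nhds 0)) :
    ∀ x, 0 < deriv u x := by
  by_contra! hneg
  obtain ⟨x₁, hx₁⟩ := hneg
  have hc : Continuous (deriv u) := hu.continuous_deriv (by norm_num)
  obtain ⟨x₀, hle, hmin⟩ := exists_nonpos_forall_le hc hdbot hdtop hx₁
  have h2 := deriv_deriv_nonneg_of_forall_le hc.continuousAt hmin
  have h1 : deriv (deriv u) x₀ = 0 := IsLocalMin.deriv_eq_zero (Eventually.of_forall hmin)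
  have hode : deriv (deriv u) = fun x => u x ^ (p + 1) - x * u x := by
    funext x
    linarith [heq x]
  have hdu : HasDerivAt u (deriv u x₀) x₀ :=
    (hu.differentiable (by norm_num) x₀).hasDerivAt
  have hd := (hdu.rpow_const (p := p + 1) (Or.inl (hpos x₀).ne')).sub
    ((hasDerivAt_id x₀).mul hdu)
  have hd' : deriv (deriv (deriv u)) x₀ =
      deriv u x₀ * (p + 1) * u x₀ ^ p - (u x₀ + x₀ * deriv u x₀) := by
    rw [hode]
    refine (hd.congr_deriv ?_).deriv
    simp
  have hx : u x₀ ^ p = x₀ := by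
    have h := heq x₀
    rw [h1, Real.rpow_add_one (hpos x₀).ne'] at h
    have : (u x₀ ^ p - x₀) * u x₀ = 0 := by linarith
    rcases mul_eq_zero.mp this with h | h
    · linarith
    · exact absurd h (hpos x₀).ne'
  have hx0 : 0 < x₀ := hx ▸ Real.rpow_pos_of_pos (hpos x₀) p
  rw [hd', hx] at h2
  have : p * x₀ * deriv u x₀ ≤ 0 :=
    mul_nonpos_of_nonneg_of_nonpos (by positivity) hle
  linarith [hpos x₀]
end
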